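/- Operational decomposition of conditional branching (the equation underlying Closure property 4): for closed pPCF terms ⊢ M : nat, ⊢ P : nat and a term Q with z : nat ⊢ Q : nat, for every n ∈ ℕ: Prob^∞_{if(M,P,z·Q), n̲} = Prob^∞_{M, 0̲} · Prob^∞_{P, n̲} + Σ_{k ≥ 0} Prob^∞_{M, (k+1)̲} · Prob^∞_{Q[z ↦ k̲], n̲}. -/

import Mathlib

/-!
The numerals are absorbing states of the Markov chain `Prob`, so `ProbPow k M (num n)` is
monotone in `k`, and by monotone convergence `ProbInf` is invariant under one step of the
chain: `ProbInf M n = ∑' N, Prob M N * ProbInf N n` (`probInf_step`).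

The conditional `ifz M P Q` moves exactly as `M` does as long as `M` is not a numeral
(`step_ifz`); once `M` is the numeral `j`, it moves with probability `1` to the branch selected
by `j`, whose probability of evaluating to `n` is `branchProb P Q n j`. With
`F M = ∑' j, ProbInf M j * branchProb P Q n j`, both inequalities of
`ProbInf (ifz M P Q) n = F M` follow by induction on a number of steps: `probPow_ifz_le` bounds
the `k`-step probability of the conditional by `F M`, and `le_probInf_ifz` bounds the `k`-step
version of `F M` by the limit probability of the conditional. Splitting off the term `j = 0`
gives the stated formula.
-/

open scoped ENNReal
open OmegaCompletePartialOrder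

/-! ## Syntax of pPCF (intrinsically typed, de Bruijn presentation) -/

/-- pPCF types: `nat` and function types `t ⇒ u`. -/
inductive PTy : Type
  | nat : PTy
  | arr : PTy → PTy → PTy
  deriving DecidableEq

/-- Typing contexts. -/
abbrev Ctx := List PTy

/-- Probabilities `κ ∈ [0,1] ∩ ℚ`. -/
def Prb : Type := {q : ℚ // 0 ≤ q ∧ q ≤ 1}

/-- Typed de Bruijn variables. -/
inductive PVar : Ctx → PTy → Type
  | zero {Γ : Ctx} {t : PTy} : PVar (t :: Γ) t
  | succ {Γ : Ctx} {t u : PTy} : PVar Γ t → PVar (u :: Γ) t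

/-- Well-typed pPCF terms `Γ ⊢ M : t`: numerals `n̲`, variables, `succ(M)`,
`if(M, P, z·Q)` (the branch `Q` binds `z : nat`), abstraction `λx^u.M`,
application `(M)N`, `coin(κ)` and `fix(M)`. -/
inductive PTm : Ctx → PTy → Type
  | num {Γ : Ctx} : ℕ → PTm Γ .nat
  | var {Γ : Ctx} {t : PTy} : PVar Γ t → PTm Γ t
  | succ {Γ : Ctx} : PTm Γ .nat → PTm Γ .nat
  | ifz {Γ : Ctx} {t : PTy} : PTm Γ .nat → PTm Γ t → PTm (.nat :: Γ) t → PTm Γ t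
  | lam {Γ : Ctx} {u t : PTy} : PTm (u :: Γ) t → PTm Γ (.arr u t)
  | app {Γ : Ctx} {u t : PTy} : PTm Γ (.arr u t) → PTm Γ u → PTm Γ t
  | coin {Γ : Ctx} : Prb → PTm Γ .nat
  | fix {Γ : Ctx} {t : PTy} : PTm Γ (.arr t t) → PTm Γ t

/-- Type-preserving renamings. -/
def PRen (Γ Δ : Ctx) : Type := ∀ t : PTy, PVar Γ t → PVar Δ t

/-- Lifting a renaming under a binder. -/
def PRen.lift {Γ Δ : Ctx} (r : PRen Γ Δ) (u : PTy) : PRen (u :: Γ) (u :: Δ) :=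
  fun _ v =>
    match v with
    | .zero => .zero
    | .succ w => .succ (r _ w)

/-- Renaming of well-typed terms. -/
def PTm.rename : ∀ {Γ Δ : Ctx} {t : PTy}, PRen Γ Δ → PTm Γ t → PTm Δ t
  | _, _, _, _, .num n => .num n
  | _, _, _, r, .var v => .var (r _ v)
  | _, _, _, r, .succ M => .succ (M.rename r)
  | _, _, _, r, .ifz M P Q => .ifz (M.rename r) (P.rename r) (Q.rename (r.lift _))
  | _, _, _, r, .lam M => .lam (M.rename (r.lift _))
  | _, _, _, r, .app M N => .app (M.rename r) (N.rename r)
  | _, _, _, _, .coin q => .coin q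
  | _, _, _, r, .fix M => .fix (M.rename r)

/-- Type-preserving simultaneous substitutions. -/
def PSub (Γ Δ : Ctx) : Type := ∀ t : PTy, PVar Γ t → PTm Δ t

/-- Lifting a substitution under a binder. -/
def PSub.lift {Γ Δ : Ctx} (σ : PSub Γ Δ) (u : PTy) : PSub (u :: Γ) (u :: Δ) :=
  fun _ v =>
    match v with
    | .zero => .var .zero
    | .succ w => (σ _ w).rename (fun _ x => .succ x)

/-- Capture-avoiding simultaneous substitution on well-typed terms. -/
def PTm.subst : ∀ {Γ Δ : Ctx} {t : PTy}, PSub Γ Δ → PTm Γ t → PTm Δ t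
  | _, _, _, _, .num n => .num n
  | _, _, _, σ, .var v => σ _ v
  | _, _, _, σ, .succ M => .succ (M.subst σ)
  | _, _, _, σ, .ifz M P Q => .ifz (M.subst σ) (P.subst σ) (Q.subst (σ.lift _))
  | _, _, _, σ, .lam M => .lam (M.subst (σ.lift _))
  | _, _, _, σ, .app M N => .app (M.subst σ) (N.subst σ)
  | _, _, _, _, .coin q => .coin q
  | _, _, _, σ, .fix M => .fix (M.subst σ)

/-- The substitution replacing the topmost variable by `N` and lowering the others. -/
def PSub.single {Γ : Ctx} {u : PTy} (N : PTm Γ u) : PSub (u :: Γ) Γ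
  | _, .zero => N
  | _, .succ w => .var w

/-- Substitution `M[x ↦ N]` of the topmost bound variable. -/
def PTm.subst1 {Γ : Ctx} {u t : PTy} (M : PTm (u :: Γ) t) (N : PTm Γ u) : PTm Γ t :=
  M.subst (PSub.single N)

/-- Probability `κ ∈ [0,1]` of a coin, as an element of `[0,1] ⊆ ℝ≥0∞`. -/
noncomputable def Prb.toE (q : Prb) : ℝ≥0∞ := ENNReal.ofReal (q.1 : ℝ)

/-- The complementary probability `1 - κ`. -/
noncomputable def Prb.toE' (q : Prb) : ℝ≥0∞ := ENNReal.ofReal (1 - (q.1 : ℝ))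

/-! ## Operational semantics -/

/-- The probabilistic reduction relation `M →_κ M'` of pPCF; deterministic
reductions `M →_d M'` are those with `κ = 1`. -/
inductive Red : ∀ {Γ : Ctx} {t : PTy}, PTm Γ t → ℝ≥0∞ → PTm Γ t → Prop
  | coin0 {Γ : Ctx} (q : Prb) : Red (Γ := Γ) (.coin q) q.toE (.num 0)
  | coin1 {Γ : Ctx} (q : Prb) : Red (Γ := Γ) (.coin q) q.toE' (.num 1)
  | beta {Γ : Ctx} {u t : PTy} (M : PTm (u :: Γ) t) (N : PTm Γ u) :
      Red (.app (.lam M) N) 1 (M.subst1 N)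
  | fixR {Γ : Ctx} {t : PTy} (M : PTm Γ (.arr t t)) :
      Red (.fix M) 1 (.app M (.fix M))
  | succNum {Γ : Ctx} (n : ℕ) : Red (Γ := Γ) (.succ (.num n)) 1 (.num (n + 1))
  | ifz0 {Γ : Ctx} {t : PTy} (P : PTm Γ t) (Q : PTm (.nat :: Γ) t) :
      Red (.ifz (.num 0) P Q) 1 P
  | ifzS {Γ : Ctx} {t : PTy} (n : ℕ) (P : PTm Γ t) (Q : PTm (.nat :: Γ) t) :
      Red (.ifz (.num (n + 1)) P Q) 1 (Q.subst1 (.num n))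
  | appL {Γ : Ctx} {u t : PTy} {M M' : PTm Γ (.arr u t)} {κ : ℝ≥0∞} (N : PTm Γ u) :
      Red M κ M' → Red (.app M N) κ (.app M' N)
  | succC {Γ : Ctx} {M M' : PTm Γ .nat} {κ : ℝ≥0∞} :
      Red M κ M' → Red (.succ M) κ (.succ M')
  | ifzC {Γ : Ctx} {t : PTy} {M M' : PTm Γ .nat} {κ : ℝ≥0∞}
      (P : PTm Γ t) (Q : PTm (.nat :: Γ) t) :
      Red M κ M' → Red (.ifz M P Q) κ (.ifz M' P Q)

/-- A term is weak-normal when it admits no reduction step. -/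
def WeakNormal {Γ : Ctx} {t : PTy} (M : PTm Γ t) : Prop := ¬ ∃ κ M', Red M κ M'

open Classical in
/-- The matrix of pPCF terms: `Prob M M' = κ` if `M →_κ M'`, `Prob M M = 1` if `M` is
weak-normal, and `0` otherwise. -/
noncomputable def Prob {Γ : Ctx} {t : PTy} (M M' : PTm Γ t) : ℝ≥0∞ :=
  if WeakNormal M ∧ M = M' then 1 else sSup {κ | Red M κ M'}

open Classical in
/-- The `k`-th matrix power `Prob^k` of the matrix of pPCF terms. -/
noncomputable def ProbPow {Γ : Ctx} {t : PTy} : ℕ → PTm Γ t → PTm Γ t → ℝ≥0∞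
  | 0, M, M' => if M = M' then 1 else 0
  | k + 1, M, M' => ∑' N : PTm Γ t, Prob M N * ProbPow k N M'

/-- `Prob^∞ M M' = sup_k Prob^k M M'`, the lub of the probabilities that `M`
reduces to `M'` in finitely many steps. -/
noncomputable def ProbInf {Γ : Ctx} {t : PTy} (M M' : PTm Γ t) : ℝ≥0∞ :=
  ⨆ k : ℕ, ProbPow k M M'

/-! ### Monotone convergence and absorption at numerals -/

/-- Monotone convergence for sums of extended nonnegative reals. -/
theorem tsum_iSup_of_monotone {α : Type*} (f : ℕ → α → ℝ≥0∞)
    (hf : ∀ a, Monotone fun k => f k a) :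
    ∑' a, ⨆ k, f k a = ⨆ k, ∑' a, f k a := by
  simp_rw [ENNReal.tsum_eq_iSup_sum]
  rw [iSup_comm]
  congr 1
  ext s
  rw [ENNReal.finsetSum_iSup_of_monotone hf]

theorem not_red_num {Γ : Ctx} {j : ℕ} {κ : ℝ≥0∞} {N : PTm Γ .nat} :
    ¬ Red (.num j) κ N := by
  intro h
  cases h

theorem weakNormal_num {Γ : Ctx} (j : ℕ) : WeakNormal (.num j : PTm Γ .nat) :=
  fun ⟨_, _, h⟩ => not_red_num h

open Classical in
theorem prob_num {Γ : Ctx} (j : ℕ) (N : PTm Γ .nat) :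
    Prob (.num j) N = if N = .num j then 1 else 0 := by
  by_cases h : N = .num j
  · simp [Prob, h, weakNormal_num]
  · simp [Prob, h, Ne.symm h, not_red_num]

theorem probPow_num_succ {Γ : Ctx} (k j : ℕ) (N : PTm Γ .nat) :
    ProbPow (k + 1) (.num j) N = ProbPow k (.num j) N := by
  classical
  simp [ProbPow, prob_num]

open Classical in
theorem probPow_num {Γ : Ctx} (k j i : ℕ) :
    ProbPow k (.num j : PTm Γ .nat) (.num i) = if i = j then 1 else 0 := by
  induction k with
  | zero => simp [ProbPow, eq_comm]
  | succ k ih => rw [probPow_num_succ, ih]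

/-- Numerals are absorbing, so the probability of having reached one within `k` steps
grows with `k`. -/
theorem probPow_mono {Γ : Ctx} (M : PTm Γ .nat) (n : ℕ) :
    Monotone fun k => ProbPow k M (.num n) := by
  apply monotone_nat_of_le_succ
  intro k
  induction k generalizing M with
  | zero =>
    by_cases h : M = .num n
    · subst h
      rw [probPow_num_succ]
    · simp [ProbPow, h]
  | succ k ih =>
    rw [ProbPow, ProbPow]
    gcongr with N
    exact ih N

/-- `Prob^∞` is invariant under one step of the chain. -/
theorem probInf_step {Γ : Ctx} (M : PTm Γ .nat) (n : ℕ) :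
    ProbInf M (.num n) = ∑' N, Prob M N * ProbInf N (.num n) := by
  have h : ProbInf M (.num n) = ⨆ k, ProbPow (k + 1) M (.num n) :=
    ((probPow_mono M n).iSup_nat_add 1).symm
  simp_rw [h, ProbInf, ENNReal.mul_iSup]
  rw [tsum_iSup_of_monotone]
  · rfl
  · intro N a b hab
    have := probPow_mono N n hab
    dsimp only at this ⊢
    gcongr

/-! ### One step of a conditional -/

/-- Averaging over one step of a term with a unique, deterministic reduct evaluates at that
reduct. -/
theorem tsum_prob_of_det {Γ : Ctx} {t : PTy} {M M' : PTm Γ t} (h : Red M 1 M')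
    (huniq : ∀ κ N, Red M κ N → κ = 1 ∧ N = M') (f : PTm Γ t → ℝ≥0∞) :
    ∑' N, Prob M N * f N = f M' := by
  have hw : ¬ WeakNormal M := fun hw => hw ⟨_, _, h⟩
  rw [tsum_eq_single M']
  · have : {κ | Red M κ M'} = {1} := by
      ext κ
      exact ⟨fun hκ => (huniq _ _ hκ).1, fun hκ => by rw [Set.mem_singleton_iff.1 hκ]; exact h⟩
    simp [Prob, hw, this]
  · intro N hN
    have : {κ | Red M κ N} = ∅ := by
      ext κ
      simpa using fun hκ => hN (huniq _ _ hκ).2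
    simp [Prob, hw, this]

theorem step_ifz_zero {Γ : Ctx} {t : PTy} (P : PTm Γ t) (Q : PTm (.nat :: Γ) t)
    (f : PTm Γ t → ℝ≥0∞) :
    ∑' N, Prob (.ifz (.num 0) P Q) N * f N = f P := by
  apply tsum_prob_of_det (.ifz0 P Q)
  intro κ N h
  cases h with
  | ifz0 => exact ⟨rfl, rfl⟩
  | ifzC _ _ h => exact (not_red_num h).elim

theorem step_ifz_succ {Γ : Ctx} {t : PTy} (j : ℕ) (P : PTm Γ t) (Q : PTm (.nat :: Γ) t)
    (f : PTm Γ t → ℝ≥0∞) :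
    ∑' N, Prob (.ifz (.num (j + 1)) P Q) N * f N = f (Q.subst1 (.num j)) := by
  apply tsum_prob_of_det (.ifzS j P Q)
  intro κ N h
  cases h with
  | ifzS => exact ⟨rfl, rfl⟩
  | ifzC _ _ h => exact (not_red_num h).elim

theorem red_ifz {Γ : Ctx} {t : PTy} {M : PTm Γ .nat} (hM : ∀ j, M ≠ .num j)
    {P : PTm Γ t} {Q : PTm (.nat :: Γ) t} {κ : ℝ≥0∞} {N : PTm Γ t}
    (h : Red (.ifz M P Q) κ N) : ∃ M', N = .ifz M' P Q ∧ Red M κ M' := by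
  cases h with
  | ifz0 => exact (hM _ rfl).elim
  | ifzS => exact (hM _ rfl).elim
  | ifzC _ _ h => exact ⟨_, rfl, h⟩

theorem prob_ifz {Γ : Ctx} {t : PTy} {M : PTm Γ .nat} (hM : ∀ j, M ≠ .num j)
    (P : PTm Γ t) (Q : PTm (.nat :: Γ) t) (M' : PTm Γ .nat) :
    Prob (.ifz M P Q) (.ifz M' P Q) = Prob M M' := by
  have hr : ∀ κ M', Red (.ifz M P Q) κ (.ifz M' P Q) ↔ Red M κ M' := by
    intro κ M'
    refine ⟨fun h => ?_, fun h => .ifzC P Q h⟩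
    obtain ⟨M'', he, h'⟩ := red_ifz hM h
    cases he
    exact h'
  have hw : WeakNormal (.ifz M P Q) ↔ WeakNormal M := by
    refine not_congr ⟨fun ⟨κ, N, h⟩ => ?_, fun ⟨κ, N, h⟩ => ⟨κ, _, .ifzC P Q h⟩⟩
    obtain ⟨M'', _, h'⟩ := red_ifz hM h
    exact ⟨κ, M'', h'⟩
  have he : PTm.ifz M P Q = .ifz M' P Q ↔ M = M' :=
    ⟨fun h => by cases h; rfl, fun h => by rw [h]⟩
  simp only [Prob, hr]
  congr 1
  exact propext (and_congr hw he)

/-- While the scrutinee is not a numeral, the conditional moves exactly as its scrutinee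
does. A non-numeral weak-normal scrutinee needs no exclusion: both terms then stay put. -/
theorem step_ifz {Γ : Ctx} {t : PTy} {M : PTm Γ .nat} (hM : ∀ j, M ≠ .num j)
    (P : PTm Γ t) (Q : PTm (.nat :: Γ) t) (f : PTm Γ t → ℝ≥0∞) :
    ∑' N, Prob (.ifz M P Q) N * f N = ∑' M', Prob M M' * f (.ifz M' P Q) := by
  have hinj : Function.Injective fun M' : PTm Γ .nat => PTm.ifz M' P Q := by
    intro A B h
    cases h
    rfl
  rw [← hinj.tsum_eq]
  · simp_rw [prob_ifz hM]
  · intro N hN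
    by_contra hne
    apply hN
    have h1 : PTm.ifz M P Q ≠ N := fun h => hne ⟨M, h⟩
    have h2 : ∀ κ, ¬ Red (.ifz M P Q) κ N := fun κ h =>
      let ⟨M', he, _⟩ := red_ifz hM h
      hne ⟨M', he.symm⟩
    simp [Prob, h1, h2]

/-! ### Decomposition along the value of the scrutinee -/

/-- The probability that the branch selected by scrutinee value `j` evaluates to `n`. -/
noncomputable def branchProb {Γ : Ctx} (P : PTm Γ .nat) (Q : PTm (.nat :: Γ) .nat) (n : ℕ) :
    ℕ → ℝ≥0∞
  | 0 => ProbInf P (.num n)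
  | j + 1 => ProbInf (Q.subst1 (.num j)) (.num n)

theorem probInf_ifz_num {Γ : Ctx} (P : PTm Γ .nat) (Q : PTm (.nat :: Γ) .nat) (n j : ℕ) :
    ProbInf (.ifz (.num j) P Q) (.num n) = branchProb P Q n j := by
  rw [probInf_step]
  cases j with
  | zero => exact step_ifz_zero P Q _
  | succ j => exact step_ifz_succ j P Q _

theorem tsum_probPow_num {Γ : Ctx} (k j : ℕ) (B : ℕ → ℝ≥0∞) :
    ∑' i, ProbPow k (.num j : PTm Γ .nat) (.num i) * B i = B j := by
  classical
  simp [probPow_num]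

theorem tsum_probInf_num {Γ : Ctx} (j : ℕ) (B : ℕ → ℝ≥0∞) :
    ∑' i, ProbInf (.num j : PTm Γ .nat) (.num i) * B i = B j := by
  classical
  simp [ProbInf, probPow_num]

theorem probPow_ifz_le {Γ : Ctx} (P : PTm Γ .nat) (Q : PTm (.nat :: Γ) .nat) (n k : ℕ)
    (M : PTm Γ .nat) :
    ProbPow k (.ifz M P Q) (.num n) ≤ ∑' j, ProbInf M (.num j) * branchProb P Q n j := by
  induction k generalizing M with
  | zero => simp [ProbPow]
  | succ k ih =>
    by_cases hM : ∃ j, M = .num j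
    · obtain ⟨j, rfl⟩ := hM
      rw [tsum_probInf_num, ← probInf_ifz_num]
      exact le_iSup (fun k => ProbPow k (.ifz (.num j) P Q) (.num n)) (k + 1)
    · push Not at hM
      rw [ProbPow, step_ifz hM]
      calc ∑' M', Prob M M' * ProbPow k (.ifz M' P Q) (.num n)
          ≤ ∑' M', Prob M M' * ∑' j, ProbInf M' (.num j) * branchProb P Q n j := by
            gcongr with M'
            exact ih _
        _ = ∑' j, ProbInf M (.num j) * branchProb P Q n j := by
            simp_rw [probInf_step M, ← ENNReal.tsum_mul_right, ← ENNReal.tsum_mul_left,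
              mul_assoc]
            exact ENNReal.tsum_comm

theorem le_probInf_ifz {Γ : Ctx} (P : PTm Γ .nat) (Q : PTm (.nat :: Γ) .nat) (n k : ℕ)
    (M : PTm Γ .nat) :
    ∑' j, ProbPow k M (.num j) * branchProb P Q n j ≤ ProbInf (.ifz M P Q) (.num n) := by
  induction k generalizing M with
  | zero =>
    by_cases hM : ∃ j, M = .num j
    · obtain ⟨j, rfl⟩ := hM
      rw [tsum_probPow_num, probInf_ifz_num]
    · push Not at hM
      simp [ProbPow, hM]
  | succ k ih =>
    by_cases hM : ∃ j, M = .num j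
    · obtain ⟨j, rfl⟩ := hM
      rw [tsum_probPow_num, probInf_ifz_num]
    · push Not at hM
      rw [probInf_step, step_ifz hM]
      calc ∑' j, ProbPow (k + 1) M (.num j) * branchProb P Q n j
          = ∑' M', Prob M M' * ∑' j, ProbPow k M' (.num j) * branchProb P Q n j := by
            simp_rw [ProbPow, ← ENNReal.tsum_mul_right, ← ENNReal.tsum_mul_left, mul_assoc]
            exact ENNReal.tsum_comm
        _ ≤ ∑' M', Prob M M' * ProbInf (.ifz M' P Q) (.num n) := by
            gcongr with M'
            exact ih _

/-- The decomposition as a single sum over the value of the scrutinee. -/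
theorem probInf_ifz_eq_tsum {Γ : Ctx} (M P : PTm Γ .nat) (Q : PTm (.nat :: Γ) .nat) (n : ℕ) :
    ProbInf (.ifz M P Q) (.num n) = ∑' j, ProbInf M (.num j) * branchProb P Q n j := by
  apply le_antisymm
  · exact iSup_le fun k => probPow_ifz_le P Q n k M
  · have h : ∑' j, ProbInf M (.num j) * branchProb P Q n j
        = ⨆ k, ∑' j, ProbPow k M (.num j) * branchProb P Q n j := by
      simp_rw [ProbInf, ENNReal.iSup_mul]
      apply tsum_iSup_of_monotone
      intro j a b hab
      have := probPow_mono M j hab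
      dsimp only at this ⊢
      gcongr
    rw [h]
    exact iSup_le fun k => le_probInf_ifz P Q n k M

/-- Operational decomposition of conditional branching (the equation underlying
Closure property 4): for closed terms `⊢ M : nat`, `⊢ P : nat` and `z : nat ⊢ Q : nat`,
for every `n ∈ ℕ`,
`Prob^∞_{if(M,P,z·Q), n̲} = Prob^∞_{M,0̲} · Prob^∞_{P,n̲}
  + ∑_{k≥0} Prob^∞_{M,(k+1)̲} · Prob^∞_{Q[z↦k̲],n̲}`. -/
theorem probInf_ifz (M : PTm [] .nat) (P : PTm [] .nat) (Q : PTm [.nat] .nat) (n : ℕ) :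
    ProbInf (.ifz M P Q) (.num n) =
      ProbInf M (.num 0) * ProbInf P (.num n) +
        ∑' k : ℕ, ProbInf M (.num (k + 1)) * ProbInf (Q.subst1 (.num k)) (.num n) := by
  rw [probInf_ifz_eq_tsum, tsum_eq_zero_add' ENNReal.summable]
  rfl
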